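/- (Existence for the first order linear ODE with specular derivatives) Let U = (a, b) ⊆ ℝ be an open interval, p : ℝ → ℝ continuous on U, S = {s₁ < s₂ < ⋯ < s_k} ⊂ U a finite set, and f : ℝ → ℝ a function that is continuous at every point of U \ S, has a jump discontinuity at each s ∈ S, and whose one-sided limits f(s] and f[s) exist as real numbers at each s ∈ S. Then there exist a function u : ℝ → ℝ continuous on U and values c₁, …, c_k ∈ ℝ such that u is specularly differentiable at every x ∈ U and u^S(x) + p(x)·u(x) = f̄(x) for all x ∈ U, where f̄ agrees with f on U \ S and f̄(sⱼ) = cⱼ for each j. -/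

import Mathlib

open Filter Topology Set

/-- The combination function `A(α,β)` from the paper: the slope of the specular
tangent determined by one-sided slopes `α` (right) and `β` (left). -/
noncomputable def specA (α β : ℝ) : ℝ :=
  if α + β = 0 then 0
  else (α * β - 1 + Real.sqrt ((α ^ 2 + 1) * (β ^ 2 + 1))) / (α + β)

/-- `HasSpecData f x₀ L α β` means: the left and right limits of `f` at `x₀` both
exist and are equal to `L`, the right specular derivative of `f` at `x₀` is `α`,
and the left specular derivative of `f` at `x₀` is `β`. -/
def HasSpecData (f : ℝ → ℝ) (x₀ L α β : ℝ) : Prop :=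
  Tendsto f (𝓝[<] x₀) (𝓝 L) ∧ Tendsto f (𝓝[>] x₀) (𝓝 L) ∧
    Tendsto (fun x => (f x - L) / (x - x₀)) (𝓝[>] x₀) (𝓝 α) ∧
    Tendsto (fun x => (f x - L) / (x - x₀)) (𝓝[<] x₀) (𝓝 β)

/-- `f` is specularly differentiable at `x₀`. -/
def SpecDifferentiableAt (f : ℝ → ℝ) (x₀ : ℝ) : Prop :=
  ∃ L α β, HasSpecData f x₀ L α β

/-- `f` is specularly differentiable at `x₀` with specular derivative `d`. -/
def HasSpecDerivAt (f : ℝ → ℝ) (x₀ d : ℝ) : Prop :=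
  ∃ L α β, HasSpecData f x₀ L α β ∧ d = specA α β

/-!
The proof is variation of constants, carried out with one-sided derivatives. A function with
one-sided limits at every point of an open interval has only countably many discontinuities there,
so it is locally integrable, and its primitives have its one-sided limits as one-sided derivatives.
With `P` a primitive of `p` and `Q` a primitive of `exp P * f`, the continuous function
`u = exp (-P) * (y₀ + Q)` therefore has one-sided derivatives `f± - p± * u` at every point. Where
`p` and `f` are continuous these agree and `u` solves the classical equation; elsewhere `A` combines
them into the specular derivative, which dictates the value of the right-hand side.
-/

section SpecularDerivative

variable {u : ℝ → ℝ} {x α β : ℝ}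

theorem specA_self (c : ℝ) : specA c c = c := by
  have hsqrt : Real.sqrt ((c ^ 2 + 1) * (c ^ 2 + 1)) = c ^ 2 + 1 :=
    Real.sqrt_mul_self (by positivity)
  unfold specA
  split_ifs with hc
  · linarith
  · rw [hsqrt, div_eq_iff hc]
    ring

theorem HasSpecData.of_hasDerivWithinAt (hα : HasDerivWithinAt u α (Ici x) x)
    (hβ : HasDerivWithinAt u β (Iic x) x) : HasSpecData u x (u x) α β := by
  have hα' := hα.mono Ioi_subset_Ici_self
  have hβ' := hβ.mono Iio_subset_Iic_self
  refine ⟨hβ'.continuousWithinAt, hα'.continuousWithinAt, ?_, ?_⟩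
  · simpa only [slope_fun_def_field] using
      (hasDerivWithinAt_iff_tendsto_slope' self_notMem_Ioi).1 hα'
  · simpa only [slope_fun_def_field] using
      (hasDerivWithinAt_iff_tendsto_slope' self_notMem_Iio).1 hβ'

theorem HasSpecDerivAt.of_hasDerivWithinAt (hα : HasDerivWithinAt u α (Ici x) x)
    (hβ : HasDerivWithinAt u β (Iic x) x) : HasSpecDerivAt u x (specA α β) :=
  ⟨u x, α, β, .of_hasDerivWithinAt hα hβ, rfl⟩

end SpecularDerivative

section Discontinuities

variable {X E : Type*} [TopologicalSpace X]

theorem countable_of_eventually_nhdsNE_notMem [HereditarilyLindelofSpace X] {s : Set X}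
    (hs : ∀ x ∈ s, ∀ᶠ y in 𝓝[≠] x, y ∉ s) : s.Countable := by
  have : DiscreteTopology s := discreteTopology_subtype_iff.2 fun x hx =>
    inf_principal_eq_bot.2 (hs x hx)
  exact countable_of_Lindelof_of_discrete

theorem eventually_oscillation_le_of_tendsto [PseudoEMetricSpace E] {f : X → E} {s : Set X} {x : X}
    {l : E} {ε : ENNReal} (hs : IsOpen s) (hf : Tendsto f (𝓝[s] x) (𝓝 l)) (hε : ε ≠ 0) :
    ∀ᶠ y in 𝓝[s] x, oscillation f y ≤ ε := by
  have hball : ∀ᶠ y in 𝓝[s] x, f y ∈ Metric.eball l (ε / 2) :=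
    hf (Metric.eball_mem_nhds l (ENNReal.half_pos hε))
  filter_upwards [eventually_eventually_nhdsWithin.2 hball, self_mem_nhdsWithin] with y hy hys
  rw [hs.nhdsWithin_eq hys] at hy
  calc oscillation f y ≤ Metric.ediam (Metric.eball l (ε / 2)) :=
        iInf₂_le (Metric.eball l (ε / 2)) hy
    _ ≤ 2 * (ε / 2) := Metric.ediam_eball_le
    _ = ε := ENNReal.mul_div_cancel two_ne_zero ENNReal.ofNat_ne_top

end Discontinuities

/-- `f` has a left and a right limit at `x`. A function with this property at every point of a set
is usually called regulated there; the value `f x` is unconstrained. -/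
def HasOneSidedLimitsAt {X E : Type*} [TopologicalSpace X] [Preorder X] [TopologicalSpace E]
    (f : X → E) (x : X) : Prop :=
  (∃ l, Tendsto f (𝓝[<] x) (𝓝 l)) ∧ ∃ r, Tendsto f (𝓝[>] x) (𝓝 r)

namespace HasOneSidedLimitsAt

open MeasureTheory

variable {X E : Type*} [TopologicalSpace X] {x : X}

theorem of_continuousAt [Preorder X] [TopologicalSpace E] {f : X → E} (hf : ContinuousAt f x) :
    HasOneSidedLimitsAt f x :=
  ⟨⟨f x, hf.mono_left nhdsWithin_le_nhds⟩, ⟨f x, hf.mono_left nhdsWithin_le_nhds⟩⟩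

theorem mul [Preorder X] [TopologicalSpace E] [Mul E] [ContinuousMul E] {f g : X → E}
    (hf : HasOneSidedLimitsAt f x) (hg : HasOneSidedLimitsAt g x) :
    HasOneSidedLimitsAt (fun y => f y * g y) x :=
  let ⟨⟨_, hfl⟩, ⟨_, hfr⟩⟩ := hf
  let ⟨⟨_, hgl⟩, ⟨_, hgr⟩⟩ := hg
  ⟨⟨_, hfl.mul hgl⟩, ⟨_, hfr.mul hgr⟩⟩

variable [LinearOrder X]

theorem eventually_oscillation_le [OrderClosedTopology X] [PseudoEMetricSpace E] {f : X → E}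
    {ε : ENNReal} (hf : HasOneSidedLimitsAt f x) (hε : ε ≠ 0) :
    ∀ᶠ y in 𝓝[≠] x, oscillation f y ≤ ε := by
  obtain ⟨⟨l, hl⟩, ⟨r, hr⟩⟩ := hf
  rw [← nhdsLT_sup_nhdsGT, eventually_sup]
  exact ⟨eventually_oscillation_le_of_tendsto isOpen_Iio hl hε,
    eventually_oscillation_le_of_tendsto isOpen_Ioi hr hε⟩

theorem countable_not_continuousAt [OrderClosedTopology X] [SecondCountableTopology X]
    [PseudoEMetricSpace E] {f : X → E} {U : Set X} (hf : ∀ x ∈ U, HasOneSidedLimitsAt f x) :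
    {x ∈ U | ¬ContinuousAt f x}.Countable := by
  have hlarge (n : ℕ) : {x ∈ U | (n : ENNReal)⁻¹ < oscillation f x}.Countable := by
    refine countable_of_eventually_nhdsNE_notMem fun x hx => ?_
    filter_upwards [(hf x hx.1).eventually_oscillation_le
      (ENNReal.inv_ne_zero.2 (ENNReal.natCast_ne_top n))] with y hy hy'
    exact hy.not_gt hy'.2
  refine (countable_iUnion hlarge).mono fun x ⟨hxU, hx⟩ => mem_iUnion.2 ?_
  rw [← Oscillation.eq_zero_iff_continuousAt] at hx
  obtain ⟨n, hn⟩ := ENNReal.exists_inv_nat_lt hx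
  exact ⟨n, hxU, hn⟩

section Measure

variable [OrderClosedTopology X] [MeasurableSpace X] [OpensMeasurableSpace X] {μ : Measure X}

theorem aestronglyMeasurable_restrict [SecondCountableTopology X] [NullSingletonClass μ]
    [PseudoEMetricSpace E] {f : X → E} {U : Set X} (hU : MeasurableSet U)
    (hf : ∀ x ∈ U, HasOneSidedLimitsAt f x) : AEStronglyMeasurable f (μ.restrict U) := by
  have hD := countable_not_continuousAt hf
  rw [← Measure.restrict_congr_set (sdiff_null_ae_eq_self (hD.measure_zero μ))]
  refine ContinuousOn.aestronglyMeasurable (fun x hx => ?_) (hU.diff hD.measurableSet)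
  exact (not_not.1 fun h => hx.2 ⟨hx.1, h⟩ : ContinuousAt f x).continuousWithinAt

theorem integrableAtFilter_nhds [IsLocallyFiniteMeasure μ] [NormedAddCommGroup E] {f : X → E}
    (hf : HasOneSidedLimitsAt f x) (hfm : StronglyMeasurableAtFilter f (𝓝 x) μ) :
    IntegrableAtFilter f (𝓝 x) μ := by
  obtain ⟨⟨l, hl⟩, ⟨r, hr⟩⟩ := hf
  have hpure : IntegrableAtFilter f (pure x) μ :=
    ⟨{x}, mem_pure.2 rfl, integrableOn_singleton (hx := isCompact_singleton.measure_lt_top)⟩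
  have hside {s : Set X} {c : E} (hs : MeasurableSet s) (hc : Tendsto f (𝓝[s] x) (𝓝 c)) :
      IntegrableAtFilter f (𝓝[s] x) μ :=
    have := hs.nhdsWithin_isMeasurablyGenerated x
    (μ.finiteAt_nhdsWithin x s).integrableAtFilter_of_tendsto
      (hfm.filter_mono nhdsWithin_le_nhds) hc
  rw [← nhdsNE_sup_pure, ← nhdsLT_sup_nhdsGT, IntegrableAtFilter.sup_iff,
    IntegrableAtFilter.sup_iff]
  exact ⟨⟨hside measurableSet_Iio hl, hside measurableSet_Ioi hr⟩, hpure⟩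

end Measure

end HasOneSidedLimitsAt

section Primitive

open MeasureTheory

-- Mathlib's fundamental theorem of calculus for left derivatives takes its limit along
-- `𝓝[≤] x ⊓ ae μ`, while a left limit is one along `𝓝[<] x`.
theorem nhdsLE_inf_ae_le_nhdsLT {X : Type*} [TopologicalSpace X] [PartialOrder X]
    [MeasurableSpace X] (μ : Measure X) [NullSingletonClass μ] (x : X) : 𝓝[≤] x ⊓ ae μ ≤ 𝓝[<] x :=
  calc 𝓝[≤] x ⊓ ae μ ≤ 𝓝[≤] x ⊓ 𝓟 {x}ᶜ :=
        inf_le_inf_left _ (le_principal_iff.2 (compl_mem_ae_iff.2 (measure_singleton x)))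
    _ = 𝓝[<] x := by
        rw [← nhdsWithin_inter', ← sdiff_eq, Iic_sdiff_right]

variable {E : Type*} [NormedAddCommGroup E] {g : ℝ → E} {c : E} {U : Set ℝ} {x₀ x : ℝ}

theorem intervalIntegrable_of_hasOneSidedLimitsAt (hU : IsOpen U) (hUc : U.OrdConnected)
    (hg : ∀ x ∈ U, HasOneSidedLimitsAt g x) (hx₀ : x₀ ∈ U) (hx : x ∈ U) :
    IntervalIntegrable g volume x₀ x := by
  have hgm : AEStronglyMeasurable g (volume.restrict U) :=
    HasOneSidedLimitsAt.aestronglyMeasurable_restrict hU.measurableSet hg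
  have hloc : LocallyIntegrableOn g U := fun y hy =>
    ((hg y hy).integrableAtFilter_nhds ⟨U, hU.mem_nhds hy, hgm⟩).filter_mono nhdsWithin_le_nhds
  rw [intervalIntegrable_iff']
  exact hloc.integrableOn_compact_subset (hUc.uIcc_subset hx₀ hx) isCompact_uIcc

variable [NormedSpace ℝ E] [CompleteSpace E]

theorem hasDerivWithinAt_Ici_integral (hU : IsOpen U) (hUc : U.OrdConnected)
    (hg : ∀ x ∈ U, HasOneSidedLimitsAt g x) (hx₀ : x₀ ∈ U) (hx : x ∈ U)
    (hc : Tendsto g (𝓝[>] x) (𝓝 c)) :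
    HasDerivWithinAt (fun y => ∫ t in x₀..y, g t) c (Ici x) x :=
  intervalIntegral.integral_hasDerivWithinAt_of_tendsto_ae_right
    (intervalIntegrable_of_hasOneSidedLimitsAt hU hUc hg hx₀ hx)
    ⟨U, mem_nhdsWithin_of_mem_nhds (hU.mem_nhds hx),
      HasOneSidedLimitsAt.aestronglyMeasurable_restrict hU.measurableSet hg⟩
    (hc.mono_left inf_le_left)

theorem hasDerivWithinAt_Iic_integral (hU : IsOpen U) (hUc : U.OrdConnected)
    (hg : ∀ x ∈ U, HasOneSidedLimitsAt g x) (hx₀ : x₀ ∈ U) (hx : x ∈ U)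
    (hc : Tendsto g (𝓝[<] x) (𝓝 c)) :
    HasDerivWithinAt (fun y => ∫ t in x₀..y, g t) c (Iic x) x :=
  intervalIntegral.integral_hasDerivWithinAt_of_tendsto_ae_right
    (intervalIntegrable_of_hasOneSidedLimitsAt hU hUc hg hx₀ hx)
    ⟨U, mem_nhdsWithin_of_mem_nhds (hU.mem_nhds hx),
      HasOneSidedLimitsAt.aestronglyMeasurable_restrict hU.measurableSet hg⟩
    (hc.mono_left (nhdsLE_inf_ae_le_nhdsLT volume x))

theorem continuousAt_integral_of_hasOneSidedLimitsAt (hU : IsOpen U) (hUc : U.OrdConnected)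
    (hg : ∀ x ∈ U, HasOneSidedLimitsAt g x) (hx₀ : x₀ ∈ U) (hx : x ∈ U) :
    ContinuousAt (fun y => ∫ t in x₀..y, g t) x := by
  obtain ⟨⟨l, hl⟩, ⟨r, hr⟩⟩ := hg x hx
  exact continuousAt_iff_continuous_left_right.2
    ⟨(hasDerivWithinAt_Iic_integral hU hUc hg hx₀ hx hl).continuousWithinAt,
      (hasDerivWithinAt_Ici_integral hU hUc hg hx₀ hx hr).continuousWithinAt⟩

end Primitive

section LinearODE

open Function

theorem hasDerivWithinAt_exp_neg_mul {P Q : ℝ → ℝ} {s : Set ℝ} {x p q : ℝ}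
    (hP : HasDerivWithinAt P p s x) (hQ : HasDerivWithinAt Q (Real.exp (P x) * q) s x) :
    HasDerivWithinAt (fun y => Real.exp (-P y) * Q y) (q - p * (Real.exp (-P x) * Q x)) s x := by
  have hexp : Real.exp (-P x) * Real.exp (P x) = 1 := by rw [← Real.exp_add]; simp
  refine (hP.fun_neg.exp.fun_mul hQ).congr_deriv ?_
  linear_combination q * hexp

/-- The solution of `u' + p u = f`, `u x₀ = y₀` given by the variation of constants formula. -/
noncomputable def variationOfConstants (p f : ℝ → ℝ) (x₀ y₀ x : ℝ) : ℝ :=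
  Real.exp (-∫ t in x₀..x, p t) *
    (y₀ + ∫ t in x₀..x, Real.exp (∫ s in x₀..t, p s) * f t)

theorem variationOfConstants_self (p f : ℝ → ℝ) (x₀ y₀ : ℝ) :
    variationOfConstants p f x₀ y₀ x₀ = y₀ := by
  simp [variationOfConstants]

variable {p f : ℝ → ℝ} {U : Set ℝ} {x₀ x : ℝ}

theorem continuousAt_exp_integral (hU : IsOpen U) (hUc : U.OrdConnected)
    (hp : ∀ x ∈ U, HasOneSidedLimitsAt p x) (hx₀ : x₀ ∈ U) (hx : x ∈ U) :
    ContinuousAt (fun y => Real.exp (∫ t in x₀..y, p t)) x :=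
  (continuousAt_integral_of_hasOneSidedLimitsAt hU hUc hp hx₀ hx).rexp

theorem hasOneSidedLimitsAt_exp_integral_mul (hU : IsOpen U) (hUc : U.OrdConnected)
    (hp : ∀ x ∈ U, HasOneSidedLimitsAt p x) (hf : HasOneSidedLimitsAt f x) (hx₀ : x₀ ∈ U)
    (hx : x ∈ U) : HasOneSidedLimitsAt (fun y => Real.exp (∫ t in x₀..y, p t) * f y) x :=
  (HasOneSidedLimitsAt.of_continuousAt (continuousAt_exp_integral hU hUc hp hx₀ hx)).mul hf

theorem hasDerivWithinAt_Ici_variationOfConstants (hU : IsOpen U) (hUc : U.OrdConnected)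
    (hp : ∀ x ∈ U, HasOneSidedLimitsAt p x) (hf : ∀ x ∈ U, HasOneSidedLimitsAt f x)
    (hx₀ : x₀ ∈ U) (y₀ : ℝ) (hx : x ∈ U) :
    HasDerivWithinAt (variationOfConstants p f x₀ y₀)
      (rightLim f x - rightLim p x * variationOfConstants p f x₀ y₀ x) (Ici x) x := by
  have hP : HasDerivWithinAt (fun y => ∫ t in x₀..y, p t) (rightLim p x) (Ici x) x :=
    hasDerivWithinAt_Ici_integral hU hUc hp hx₀ hx (tendsto_rightLim_of_tendsto (hp x hx).2)
  have hQ : HasDerivWithinAt (fun y => ∫ t in x₀..y, Real.exp (∫ s in x₀..t, p s) * f t)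
      (Real.exp (∫ t in x₀..x, p t) * rightLim f x) (Ici x) x :=
    hasDerivWithinAt_Ici_integral hU hUc
      (fun y hy => hasOneSidedLimitsAt_exp_integral_mul hU hUc hp (hf y hy) hx₀ hy) hx₀ hx
      (((continuousAt_exp_integral hU hUc hp hx₀ hx).mono_left nhdsWithin_le_nhds).mul
        (tendsto_rightLim_of_tendsto (hf x hx).2))
  exact hasDerivWithinAt_exp_neg_mul hP (hQ.const_add y₀)

theorem hasDerivWithinAt_Iic_variationOfConstants (hU : IsOpen U) (hUc : U.OrdConnected)
    (hp : ∀ x ∈ U, HasOneSidedLimitsAt p x) (hf : ∀ x ∈ U, HasOneSidedLimitsAt f x)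
    (hx₀ : x₀ ∈ U) (y₀ : ℝ) (hx : x ∈ U) :
    HasDerivWithinAt (variationOfConstants p f x₀ y₀)
      (leftLim f x - leftLim p x * variationOfConstants p f x₀ y₀ x) (Iic x) x := by
  have hP : HasDerivWithinAt (fun y => ∫ t in x₀..y, p t) (leftLim p x) (Iic x) x :=
    hasDerivWithinAt_Iic_integral hU hUc hp hx₀ hx (tendsto_leftLim_of_tendsto (hp x hx).1)
  have hQ : HasDerivWithinAt (fun y => ∫ t in x₀..y, Real.exp (∫ s in x₀..t, p s) * f t)
      (Real.exp (∫ t in x₀..x, p t) * leftLim f x) (Iic x) x :=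
    hasDerivWithinAt_Iic_integral hU hUc
      (fun y hy => hasOneSidedLimitsAt_exp_integral_mul hU hUc hp (hf y hy) hx₀ hy) hx₀ hx
      (((continuousAt_exp_integral hU hUc hp hx₀ hx).mono_left nhdsWithin_le_nhds).mul
        (tendsto_leftLim_of_tendsto (hf x hx).1))
  exact hasDerivWithinAt_exp_neg_mul hP (hQ.const_add y₀)

/-- The value at `x` of the right-hand side of `u^S + p u = f` when `u` has the one-sided
derivatives `f± - p± u`. One-sided limits are taken with `Function.leftLim` and
`Function.rightLim`, which return the value of the function where the limit does not exist. -/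
noncomputable def specForcing (p f u : ℝ → ℝ) (x : ℝ) : ℝ :=
  specA (rightLim f x - rightLim p x * u x) (leftLim f x - leftLim p x * u x) + p x * u x

theorem specForcing_of_continuousAt (u : ℝ → ℝ) (hp : ContinuousAt p x)
    (hf : ContinuousAt f x) : specForcing p f u x = f x := by
  rw [specForcing, hp.continuousWithinAt.leftLim_eq, hp.continuousWithinAt.rightLim_eq,
    hf.continuousWithinAt.leftLim_eq, hf.continuousWithinAt.rightLim_eq, specA_self,
    sub_add_cancel]

end LinearODE

theorem linear_ode_specular_existence_general {U : Set ℝ} (hU : IsOpen U) (hUc : U.OrdConnected)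
    {p f : ℝ → ℝ} (hp : ∀ x ∈ U, HasOneSidedLimitsAt p x)
    (hf : ∀ x ∈ U, HasOneSidedLimitsAt f x) {x₀ : ℝ} (hx₀ : x₀ ∈ U) (y₀ : ℝ) :
    ∃ u fbar : ℝ → ℝ, u x₀ = y₀ ∧
      (∀ x, (x ∈ U → ContinuousAt p x ∧ ContinuousAt f x) → fbar x = f x) ∧
      ContinuousOn u U ∧
      ∀ x ∈ U, ∃ d, HasSpecDerivAt u x d ∧ d + p x * u x = fbar x := by
  classical
  set u := variationOfConstants p f x₀ y₀
  have hright {x} (hx : x ∈ U) :=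
    hasDerivWithinAt_Ici_variationOfConstants hU hUc hp hf hx₀ y₀ hx
  have hleft {x} (hx : x ∈ U) :=
    hasDerivWithinAt_Iic_variationOfConstants hU hUc hp hf hx₀ y₀ hx
  refine ⟨u, U.piecewise (specForcing p f u) f, variationOfConstants_self p f x₀ y₀,
    fun x hx => ?_, fun x hx => ?_, fun x hx => ?_⟩
  · by_cases hxU : x ∈ U
    · rw [piecewise_eq_of_mem _ _ _ hxU]
      exact specForcing_of_continuousAt u (hx hxU).1 (hx hxU).2
    · exact piecewise_eq_of_notMem _ _ _ hxU
  · exact (continuousAt_iff_continuous_left_right.2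
      ⟨(hleft hx).continuousWithinAt, (hright hx).continuousWithinAt⟩).continuousWithinAt
  · rw [piecewise_eq_of_mem _ _ _ hx]
    exact ⟨_, .of_hasDerivWithinAt (hright hx) (hleft hx), rfl⟩

theorem linear_ode_specular_existence (a b : ℝ) (hab : a < b) (p f : ℝ → ℝ)
    (hp : ContinuousOn p (Set.Ioo a b)) (S : Finset ℝ) (hS : ↑S ⊆ Set.Ioo a b)
    (hcont : ∀ x ∈ Set.Ioo a b, x ∉ S → ContinuousAt f x)
    (hjump : ∀ s ∈ S, ∃ l r : ℝ, Tendsto f (𝓝[<] s) (𝓝 l) ∧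
      Tendsto f (𝓝[>] s) (𝓝 r) ∧ l ≠ r) :
    ∃ u fbar : ℝ → ℝ, (∀ x, x ∉ S → fbar x = f x) ∧
      ContinuousOn u (Set.Ioo a b) ∧
      ∀ x ∈ Set.Ioo a b, ∃ d, HasSpecDerivAt u x d ∧ d + p x * u x = fbar x := by
  have hpc : ∀ x ∈ Ioo a b, ContinuousAt p x := fun x hx =>
    hp.continuousAt (isOpen_Ioo.mem_nhds hx)
  have hf : ∀ x ∈ Ioo a b, HasOneSidedLimitsAt f x := by
    intro x hx
    by_cases hxS : x ∈ S
    · obtain ⟨l, r, hl, hr, -⟩ := hjump x hxS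
      exact ⟨⟨l, hl⟩, ⟨r, hr⟩⟩
    · exact .of_continuousAt (hcont x hx hxS)
  obtain ⟨x₀, hx₀⟩ := nonempty_Ioo.2 hab
  obtain ⟨u, fbar, -, hfbar, hu⟩ :=
    linear_ode_specular_existence_general isOpen_Ioo ordConnected_Ioo
      (fun x hx => .of_continuousAt (hpc x hx)) hf hx₀ 0
  exact ⟨u, fbar, fun x hxS => hfbar x fun hx => ⟨hpc x hx, hcont x hx hxS⟩, hu⟩
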